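/- Let a > 1 and 0 ≤ b < min(1, 1/(a−1)) be fixed reals, let ε ≥ 0, and set k = (2 − a·b)/(1 − b). Suppose there exist constants C, c ≥ 1 such that for every m, every m-vertex directed weighted graph (with polynomially bounded weights) admits a (⌈m^b⌉, ε)-hopset with at most C·m^{2−a·b}·(log m)^c edges. Then there exist constants C', c', C'' ≥ 1 such that for every n-vertex directed weighted graph G and every real β with n^b < β ≤ n, G admits a (⌈C''·β⌉, ε)-hopset with at most C'·(n/β)^k·(log n)^{c'} edges. -/

import Mathlib

/-!
Sample `m` vertices of `G`, with `m ^ (1 - b)` about `n log n / β`, so that every shortest walk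
with `L ≈ 2 n log n / m` edges contains a sampled vertex; a union bound over pairs of endpoints
shows that such a sample exists (`exists_hitting_between`). Walks are taken shortest and, subject
to that, with fewest edges, so that `L` edges give `L` distinct vertices.

On the sample, put an edge, weighted by the distance in `G`, wherever a shortest walk has at most
`L + 1` edges. This keeps the distances of `G` (`sampleGraph_dist`). The hypothesis, applied to
this `m`-vertex graph, gives a hopset of hopbound `⌈m ^ b⌉` with about `m ^ (2 - a b)` edges, and
`m ^ (2 - a b)` is `(n / β) ^ k` up to logarithms. In `G`, a walk from `u` to `v` reaches a sampled
vertex within `L` edges, uses `⌈m ^ b⌉` hops of the sampled graph, each expanding into at most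
`L + 1` edges, and leaves the sample for `v` with `L` more (`IsHopset.of_sampleGraph`). The total,
`O(m ^ b L)`, is `O(β)`, as `m ^ b ≤ n ^ b < β`. If `m` would exceed `n`, a hopset of `G` itself,
of hopbound `⌈n ^ b⌉`, is already small enough.

Distances in the sampled graph may exceed `m ^ q`, but weights are real and the hopset property is
invariant under scaling, so they can be scaled down to at most `1` (`exists_scale_polyBounded`).
-/

open scoped ENNReal

namespace Hopsets

/-- A weighted directed graph on vertex type `V`: a finite edge set together
with a weight function. -/
structure WDigraph (V : Type) where
  edges : Finset (V × V)
  w : V × V → ℝ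

variable {V : Type}

/-- All edge weights are nonnegative. -/
def WDigraph.Nonneg (G : WDigraph V) : Prop := ∀ e, 0 ≤ G.w e

/-- Edge weights are polynomially bounded (degree `q`) in the number of vertices. -/
def WDigraph.PolyBounded [Fintype V] (G : WDigraph V) (q : ℕ) : Prop :=
  ∀ e ∈ G.edges, G.w e ≤ (Fintype.card V : ℝ) ^ q

/-- `G` encodes an undirected graph: edges come in symmetric pairs of equal weight. -/
def WDigraph.Symmetric (G : WDigraph V) : Prop :=
  ∀ e ∈ G.edges, (e.2, e.1) ∈ G.edges ∧ G.w (e.2, e.1) = G.w e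

/-- `G` is unweighted: every edge has weight `1`. -/
def WDigraph.Unweighted (G : WDigraph V) : Prop := ∀ e, G.w e = 1

/-- `IsWalkFrom G u v l` : the list of edges `l` forms a walk from `u` to `v` in `G`. -/
def IsWalkFrom (G : WDigraph V) : V → V → List (V × V) → Prop
  | u, v, [] => u = v
  | u, v, e :: l => e ∈ G.edges ∧ e.1 = u ∧ IsWalkFrom G e.2 v l

/-- The total weight of a walk, as an extended nonnegative real. -/
noncomputable def walkWeight (G : WDigraph V) (l : List (V × V)) : ℝ≥0∞ :=
  ENNReal.ofReal ((l.map G.w).sum)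

/-- `β`-hop-bounded distance: the infimum weight of a `u`-`v` walk with at most `β` edges. -/
noncomputable def WDigraph.hopDist (G : WDigraph V) (β : ℕ) (u v : V) : ℝ≥0∞ :=
  ⨅ l ∈ {l : List (V × V) | IsWalkFrom G u v l ∧ l.length ≤ β}, walkWeight G l

/-- Distance: infimum weight of a `u`-`v` walk (`∞` if there is none). -/
noncomputable def WDigraph.dist (G : WDigraph V) (u v : V) : ℝ≥0∞ :=
  ⨅ l ∈ {l : List (V × V) | IsWalkFrom G u v l}, walkWeight G l

/-- `v` is reachable from `u` in `G`. -/
def WDigraph.Reachable (G : WDigraph V) (u v : V) : Prop :=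
  ∃ l, IsWalkFrom G u v l

/-- The graph `G ∪ H` obtained by adding the edge set `H`, each added edge `(x,y)`
weighted by `dist_G(x,y)`. -/
noncomputable def WDigraph.augment [DecidableEq V] (G : WDigraph V) (H : Finset (V × V)) :
    WDigraph V where
  edges := G.edges ∪ H
  w := fun e => if e ∈ H then (G.dist e.1 e.2).toReal else G.w e

/-- `H` is a `(β,ε)`-hopset for `G`:
`dist_G(u,v) ≤ dist^{(β)}_{G∪H}(u,v) ≤ (1+ε)·dist_G(u,v)` for all `u, v`. -/
def IsHopset [DecidableEq V] (G : WDigraph V) (β : ℕ) (ε : ℝ) (H : Finset (V × V)) : Prop :=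
  ∀ u v, G.dist u v ≤ (G.augment H).hopDist β u v ∧
    (G.augment H).hopDist β u v ≤ ENNReal.ofReal (1 + ε) * G.dist u v

/-- The subgraph of `G` with edge set `E'` (same weights). -/
def WDigraph.sub (G : WDigraph V) (E' : Finset (V × V)) : WDigraph V :=
  ⟨E', G.w⟩

/-- `E'` (a subgraph of `G`) is an `r`-missing `t`-spanner: for every reachable pair
`(u,v)` there is a `u`-`v` walk in `G` of weight at most `t·dist_G(u,v)` with at most
`r` edges outside `E'`. -/
def IsMissingSpanner [DecidableEq V] (G : WDigraph V) (E' : Finset (V × V))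
    (r : ℕ) (t : ℝ) : Prop :=
  ∀ u v, G.Reachable u v → ∃ l, IsWalkFrom G u v l ∧
    walkWeight G l ≤ ENNReal.ofReal t * G.dist u v ∧
    (l.filter (fun e => decide (e ∉ E'))).length ≤ r

/-! ### Walks and distances -/

theorem isWalkFrom_append {G : WDigraph V} {l₁ l₂ : List (V × V)} {u v : V} :
    IsWalkFrom G u v (l₁ ++ l₂) ↔ ∃ x, IsWalkFrom G u x l₁ ∧ IsWalkFrom G x v l₂ := by
  induction l₁ generalizing u with
  | nil => simp [IsWalkFrom]
  | cons e l ih => simp [IsWalkFrom, ih, and_assoc]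

theorem IsWalkFrom.mem_edges {G : WDigraph V} {l : List (V × V)} {u v : V}
    (h : IsWalkFrom G u v l) : ∀ e ∈ l, e ∈ G.edges := by
  induction l generalizing u with
  | nil => simp
  | cons e l ih =>
    intro e' he'
    rcases List.mem_cons.1 he' with rfl | h'
    · exact h.1
    · exact ih h.2.2 e' h'

theorem sum_map_nonneg {G : WDigraph V} (hG : G.Nonneg) (l : List (V × V)) :
    0 ≤ (l.map G.w).sum := by
  apply List.sum_nonneg
  intro x hx
  obtain ⟨e, -, rfl⟩ := List.mem_map.1 hx
  exact hG e

@[simp] theorem walkWeight_nil (G : WDigraph V) : walkWeight G [] = 0 := by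
  simp [walkWeight]

theorem walkWeight_cons {G : WDigraph V} (hG : G.Nonneg) (e : V × V) (l : List (V × V)) :
    walkWeight G (e :: l) = ENNReal.ofReal (G.w e) + walkWeight G l := by
  simp only [walkWeight, List.map_cons, List.sum_cons]
  exact ENNReal.ofReal_add (hG e) (sum_map_nonneg hG l)

theorem walkWeight_append {G : WDigraph V} (hG : G.Nonneg) (l₁ l₂ : List (V × V)) :
    walkWeight G (l₁ ++ l₂) = walkWeight G l₁ + walkWeight G l₂ := by
  simp only [walkWeight, List.map_append, List.sum_append]
  exact ENNReal.ofReal_add (sum_map_nonneg hG l₁) (sum_map_nonneg hG l₂)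

theorem walkWeight_ne_top (G : WDigraph V) (l : List (V × V)) : walkWeight G l ≠ ⊤ :=
  ENNReal.ofReal_ne_top

theorem dist_le {G : WDigraph V} {u v : V} {l : List (V × V)} (h : IsWalkFrom G u v l) :
    G.dist u v ≤ walkWeight G l :=
  iInf₂_le l h

theorem hopDist_le {G : WDigraph V} {u v : V} {l : List (V × V)} {β : ℕ}
    (h : IsWalkFrom G u v l) (hl : l.length ≤ β) :
    G.hopDist β u v ≤ walkWeight G l :=
  iInf₂_le l ⟨h, hl⟩

theorem hopDist_anti {G : WDigraph V} {u v : V} {β β' : ℕ} (h : β ≤ β') :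
    G.hopDist β' u v ≤ G.hopDist β u v :=
  le_iInf₂ fun _ hl => hopDist_le hl.1 (hl.2.trans h)

@[simp] theorem dist_self (G : WDigraph V) (u : V) : G.dist u u = 0 := by
  have h : G.dist u u ≤ walkWeight G [] := dist_le (l := []) rfl
  simpa using h

/-- Any nonempty family of walks has a lightest member. The weights lie in the additive monoid
generated by the finitely many edge weights, which is well ordered as these are nonnegative. -/
theorem exists_lightest {G : WDigraph V} (hG : G.Nonneg) (P : Set (List (V × V)))
    (hP : ∀ l ∈ P, ∀ e ∈ l, e ∈ G.edges) (hne : P.Nonempty) :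
    ∃ l₀ ∈ P, ∀ l ∈ P, walkWeight G l₀ ≤ walkWeight G l := by
  have hpwo : (AddSubmonoid.closure (G.w '' (G.edges : Set (V × V))) : Set ℝ).IsPWO := by
    apply Set.IsPWO.addSubmonoid_closure
    · rintro x ⟨e, -, rfl⟩
      exact hG e
    · exact (G.edges.finite_toSet.image _).isPWO
  have hsub : (fun l : List (V × V) => (l.map G.w).sum) '' P ⊆
      (AddSubmonoid.closure (G.w '' (G.edges : Set (V × V))) : Set ℝ) := by
    rintro x ⟨l, hl, rfl⟩
    apply AddSubmonoid.list_sum_mem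
    intro y hy
    obtain ⟨e, he, rfl⟩ := List.mem_map.1 hy
    exact AddSubmonoid.subset_closure ⟨e, hP l hl e he, rfl⟩
  have hwf := (hpwo.mono hsub).isWF
  obtain ⟨l₀, hl₀, h⟩ := hwf.min_mem (hne.image _)
  refine ⟨l₀, hl₀, fun l hl => ENNReal.ofReal_le_ofReal ?_⟩
  have := hwf.min_le (hne.image _) (Set.mem_image_of_mem _ hl)
  simpa [← h] using this

theorem exists_walk_dist {G : WDigraph V} (hG : G.Nonneg) {u v : V} (h : G.dist u v ≠ ⊤) :
    ∃ l, IsWalkFrom G u v l ∧ walkWeight G l = G.dist u v := by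
  have hne : {l | IsWalkFrom G u v l}.Nonempty := by
    by_contra hcon
    rw [Set.not_nonempty_iff_eq_empty] at hcon
    exact h (by simp [WDigraph.dist, hcon])
  obtain ⟨l₀, h₀, hmin⟩ := exists_lightest hG _ (fun l hl => IsWalkFrom.mem_edges hl) hne
  exact ⟨l₀, h₀, le_antisymm (le_iInf₂ hmin) (dist_le h₀)⟩

theorem exists_walk_hopDist {G : WDigraph V} (hG : G.Nonneg) {u v : V} {β : ℕ}
    (h : G.hopDist β u v ≠ ⊤) :
    ∃ l, IsWalkFrom G u v l ∧ l.length ≤ β ∧ walkWeight G l = G.hopDist β u v := by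
  have hne : {l | IsWalkFrom G u v l ∧ l.length ≤ β}.Nonempty := by
    by_contra hcon
    rw [Set.not_nonempty_iff_eq_empty] at hcon
    exact h (by simp [WDigraph.hopDist, hcon])
  obtain ⟨l₀, h₀, hmin⟩ := exists_lightest hG _ (fun l hl => IsWalkFrom.mem_edges hl.1) hne
  exact ⟨l₀, h₀.1, h₀.2, le_antisymm (le_iInf₂ hmin) (hopDist_le h₀.1 h₀.2)⟩

theorem dist_triangle {G : WDigraph V} (hG : G.Nonneg) (u x v : V) :
    G.dist u v ≤ G.dist u x + G.dist x v := by
  by_cases h₁ : G.dist u x = ⊤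
  · simp [h₁]
  by_cases h₂ : G.dist x v = ⊤
  · simp [h₂]
  obtain ⟨l₁, hl₁, hw₁⟩ := exists_walk_dist hG h₁
  obtain ⟨l₂, hl₂, hw₂⟩ := exists_walk_dist hG h₂
  rw [← hw₁, ← hw₂, ← walkWeight_append hG]
  exact dist_le (isWalkFrom_append.2 ⟨x, hl₁, hl₂⟩)

theorem hopDist_triangle {G : WDigraph V} (hG : G.Nonneg) (u x v : V) (β₁ β₂ : ℕ) :
    G.hopDist (β₁ + β₂) u v ≤ G.hopDist β₁ u x + G.hopDist β₂ x v := by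
  by_cases h₁ : G.hopDist β₁ u x = ⊤
  · simp [h₁]
  by_cases h₂ : G.hopDist β₂ x v = ⊤
  · simp [h₂]
  obtain ⟨l₁, hl₁, hb₁, hw₁⟩ := exists_walk_hopDist hG h₁
  obtain ⟨l₂, hl₂, hb₂, hw₂⟩ := exists_walk_hopDist hG h₂
  rw [← hw₁, ← hw₂, ← walkWeight_append hG]
  exact hopDist_le (isWalkFrom_append.2 ⟨x, hl₁, hl₂⟩) (by simp; omega)

/-- A function obeying the triangle inequality and dominated by the weight of each edge is
dominated by the weight of each walk. -/
theorem le_walkWeight {G : WDigraph V} (hG : G.Nonneg) (D : V → V → ℝ≥0∞)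
    (hself : ∀ x, D x x = 0) (htri : ∀ x y z, D x z ≤ D x y + D y z)
    (hedge : ∀ e ∈ G.edges, D e.1 e.2 ≤ ENNReal.ofReal (G.w e))
    {u v : V} {l : List (V × V)} (h : IsWalkFrom G u v l) : D u v ≤ walkWeight G l := by
  induction l generalizing u with
  | nil => obtain rfl : u = v := h; simp [hself]
  | cons e l ih =>
    obtain ⟨he, rfl, h'⟩ := h
    rw [walkWeight_cons hG]
    exact (htri _ e.2 _).trans (add_le_add (hedge e he) (ih h'))

theorem dist_le_of_mem_edges {G : WDigraph V} {e : V × V} (he : e ∈ G.edges) :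
    G.dist e.1 e.2 ≤ ENNReal.ofReal (G.w e) := by
  have h : IsWalkFrom G e.1 e.2 [e] := ⟨he, rfl, rfl⟩
  simpa [walkWeight] using dist_le h

/-! ### Augmented graphs -/

theorem augment_nonneg [DecidableEq V] {G : WDigraph V} (hG : G.Nonneg) (H : Finset (V × V)) :
    (G.augment H).Nonneg := by
  intro e
  simp only [WDigraph.augment]
  split_ifs
  · exact ENNReal.toReal_nonneg
  · exact hG e

/-- The finiteness hypothesis matters: an added edge between vertices at infinite distance would
get weight `(⊤ : ℝ≥0∞).toReal = 0`. -/
theorem dist_le_hopDist_augment [DecidableEq V] {G : WDigraph V} (hG : G.Nonneg)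
    {H : Finset (V × V)} (hH : ∀ e ∈ H, G.dist e.1 e.2 ≠ ⊤) (β : ℕ) (u v : V) :
    G.dist u v ≤ (G.augment H).hopDist β u v := by
  refine le_iInf₂ fun l hl => le_walkWeight (augment_nonneg hG H) G.dist (dist_self G)
    (dist_triangle hG) ?_ hl.1
  intro e he
  by_cases heH : e ∈ H
  · simp [WDigraph.augment, heH, ENNReal.ofReal_toReal (hH e heH)]
  · have : e ∈ G.edges := by simpa [WDigraph.augment, heH] using he
    simpa [WDigraph.augment, heH] using dist_le_of_mem_edges this

theorem IsHopset.dist_ne_top [DecidableEq V] {G : WDigraph V} {β : ℕ} (hβ : 1 ≤ β) {ε : ℝ}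
    {H : Finset (V × V)} (h : IsHopset G β ε H) {e : V × V} (he : e ∈ H) :
    G.dist e.1 e.2 ≠ ⊤ := by
  have hw : IsWalkFrom (G.augment H) e.1 e.2 [e] :=
    ⟨by simp [WDigraph.augment, he], rfl, rfl⟩
  exact ne_top_of_le_ne_top (walkWeight_ne_top _ _)
    ((h e.1 e.2).1.trans (hopDist_le hw (by simpa using hβ)))

theorem IsHopset.mono [DecidableEq V] {G : WDigraph V} (hG : G.Nonneg) {β β' : ℕ} (hβ : 1 ≤ β)
    (hββ' : β ≤ β') {ε : ℝ} {H : Finset (V × V)} (h : IsHopset G β ε H) :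
    IsHopset G β' ε H := fun u v =>
  ⟨dist_le_hopDist_augment hG (fun _ he => h.dist_ne_top hβ he) _ _ _,
    (hopDist_anti hββ').trans (h u v).2⟩

theorem augment_walk [DecidableEq V] {G : WDigraph V} (hG : G.Nonneg) (H : Finset (V × V))
    {u v : V} {l : List (V × V)} (h : IsWalkFrom G u v l) :
    IsWalkFrom (G.augment H) u v l ∧ walkWeight (G.augment H) l ≤ walkWeight G l := by
  induction l generalizing u with
  | nil => exact ⟨h, by simp⟩
  | cons e l ih =>
    obtain ⟨he, rfl, h'⟩ := h
    refine ⟨⟨by simp [WDigraph.augment, he], rfl, (ih h').1⟩, ?_⟩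
    rw [walkWeight_cons hG, walkWeight_cons (augment_nonneg hG H)]
    refine add_le_add (ENNReal.ofReal_le_ofReal ?_) (ih h').2
    simp only [WDigraph.augment]
    split_ifs
    · exact ENNReal.toReal_le_of_le_ofReal (hG e) (dist_le_of_mem_edges he)
    · exact le_rfl

/-! ### Hop counts of shortest walks -/

/-- The least number of edges on a minimum-weight walk from `u` to `v`
(`0` by convention when `v` is not reachable from `u`). -/
noncomputable def WDigraph.hop (G : WDigraph V) (u v : V) : ℕ :=
  sInf {k | ∃ l, IsWalkFrom G u v l ∧ walkWeight G l = G.dist u v ∧ l.length = k}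

theorem hop_spec {G : WDigraph V} (hG : G.Nonneg) {u v : V} (h : G.dist u v ≠ ⊤) :
    ∃ l, IsWalkFrom G u v l ∧ walkWeight G l = G.dist u v ∧ l.length = G.hop u v := by
  obtain ⟨l, hl, hw⟩ := exists_walk_dist hG h
  exact Nat.sInf_mem (s := {k | ∃ l, IsWalkFrom G u v l ∧ walkWeight G l = G.dist u v ∧
    l.length = k}) ⟨l.length, l, hl, hw, rfl⟩

theorem hop_le {G : WDigraph V} {u v : V} {l : List (V × V)} (h : IsWalkFrom G u v l)
    (hw : walkWeight G l = G.dist u v) : G.hop u v ≤ l.length :=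
  Nat.sInf_le ⟨l, h, hw, rfl⟩

/-- `x` lies between `u` and `v`: it is on a walk from `u` to `v` that has minimum weight and,
subject to that, the minimum number of edges. -/
structure Between (G : WDigraph V) (u x v : V) : Prop where
  ne_top : G.dist u v ≠ ⊤
  dist_add : G.dist u x + G.dist x v = G.dist u v
  hop_add : G.hop u x + G.hop x v = G.hop u v

theorem Between.ne_top_left {G : WDigraph V} {u x v : V} (h : Between G u x v) :
    G.dist u x ≠ ⊤ := by
  have := h.ne_top
  rw [← h.dist_add] at this
  exact (ENNReal.add_ne_top.1 this).1

theorem Between.ne_top_right {G : WDigraph V} {u x v : V} (h : Between G u x v) :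
    G.dist x v ≠ ⊤ := by
  have := h.ne_top
  rw [← h.dist_add] at this
  exact (ENNReal.add_ne_top.1 this).2

theorem hop_triangle {G : WDigraph V} (hG : G.Nonneg) {u x v : V} (h : G.dist u v ≠ ⊤)
    (hd : G.dist u x + G.dist x v = G.dist u v) :
    G.hop u v ≤ G.hop u x + G.hop x v := by
  rw [← hd] at h
  obtain ⟨l₁, h₁, w₁, e₁⟩ := hop_spec hG (ENNReal.add_ne_top.1 h).1
  obtain ⟨l₂, h₂, w₂, e₂⟩ := hop_spec hG (ENNReal.add_ne_top.1 h).2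
  rw [← e₁, ← e₂, ← List.length_append]
  exact hop_le (isWalkFrom_append.2 ⟨x, h₁, h₂⟩) (by rw [walkWeight_append hG, w₁, w₂, hd])

theorem exists_between {G : WDigraph V} (hG : G.Nonneg) {u v : V} (h : G.dist u v ≠ ⊤) {i : ℕ}
    (hi : i ≤ G.hop u v) : ∃ x, Between G u x v ∧ G.hop u x = i := by
  obtain ⟨l, hl, hw, hlen⟩ := hop_spec hG h
  rw [← List.take_append_drop i l] at hl hw
  obtain ⟨x, h₁, h₂⟩ := isWalkFrom_append.1 hl
  rw [walkWeight_append hG] at hw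
  have d₁ := dist_le h₁
  have d₂ := dist_le h₂
  have ht := dist_triangle hG u x v
  have hd : G.dist u x + G.dist x v = G.dist u v :=
    le_antisymm (hw ▸ add_le_add d₁ d₂) ht
  have hn := h
  rw [← hd] at hn
  obtain ⟨n₁, n₂⟩ := ENNReal.add_ne_top.1 hn
  have e₁ : walkWeight G (l.take i) = G.dist u x := by
    refine le_antisymm ?_ d₁
    by_contra! hc
    have := ENNReal.add_lt_add_of_lt_of_le n₂ hc d₂
    rw [hd, hw] at this
    exact lt_irrefl _ this
  have e₂ : walkWeight G (l.drop i) = G.dist x v := by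
    refine le_antisymm ?_ d₂
    by_contra! hc
    have := ENNReal.add_lt_add_of_le_of_lt n₁ d₁ hc
    rw [hd, hw] at this
    exact lt_irrefl _ this
  have k₁ := hop_le h₁ e₁
  have k₂ := hop_le h₂ e₂
  have k₃ := hop_triangle hG h hd
  rw [List.length_take] at k₁
  rw [List.length_drop] at k₂
  have : i ⊓ l.length ≤ i := min_le_left _ _
  exact ⟨x, ⟨h, hd, by omega⟩, by omega⟩

theorem Between.trans_left {G : WDigraph V} (hG : G.Nonneg) {u x y v : V}
    (h₁ : Between G u y v) (h₂ : Between G u x y) : Between G u x v ∧ Between G x y v := by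
  have t₁ := dist_triangle hG u x v
  have t₂ := dist_triangle hG x y v
  have e : G.dist u x + (G.dist x y + G.dist y v) = G.dist u v := by
    rw [← add_assoc, h₂.dist_add, h₁.dist_add]
  have d : G.dist u x + G.dist x v = G.dist u v :=
    le_antisymm (e ▸ add_le_add le_rfl t₂) t₁
  have d' : G.dist x y + G.dist y v = G.dist x v := by
    rw [← d] at e
    exact (ENNReal.add_right_inj h₂.ne_top_left).1 e
  have n : G.dist x v ≠ ⊤ := by
    rw [← d']
    exact ENNReal.add_ne_top.2 ⟨h₂.ne_top_right, h₁.ne_top_right⟩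
  have k₁ := hop_triangle hG h₁.ne_top d
  have k₂ := hop_triangle hG n d'
  have := h₁.hop_add
  have := h₂.hop_add
  exact ⟨⟨h₁.ne_top, d, by omega⟩, ⟨n, d', by omega⟩⟩

theorem Between.trans_right {G : WDigraph V} (hG : G.Nonneg) {u x y v : V}
    (h₁ : Between G u y v) (h₂ : Between G y x v) : Between G u x v := by
  have t₁ := dist_triangle hG u x v
  have t₂ := dist_triangle hG u y x
  have e : G.dist u y + G.dist y x + G.dist x v = G.dist u v := by
    rw [add_assoc, h₂.dist_add, h₁.dist_add]
  have d : G.dist u x + G.dist x v = G.dist u v :=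
    le_antisymm (e ▸ add_le_add t₂ le_rfl) t₁
  have d' : G.dist u y + G.dist y x = G.dist u x := by
    rw [← d] at e
    exact (ENNReal.add_left_inj h₂.ne_top_right).1 e
  have n : G.dist u x ≠ ⊤ := by
    rw [← d']
    exact ENNReal.add_ne_top.2 ⟨h₁.ne_top_left, h₂.ne_top_left⟩
  have k₁ := hop_triangle hG h₁.ne_top d
  have k₂ := hop_triangle hG n d'
  have := h₁.hop_add
  have := h₂.hop_add
  exact ⟨h₁.ne_top, d, by omega⟩

/-! ### Hitting shortest walks -/

/-- Union bound: if `N` sets of size at least `L` satisfy `N (|V| - L)^t < |V|^t`, some `t`-tuple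
of vertices meets all of them. -/
theorem exists_hitting {ι : Type} [Fintype V] [DecidableEq V] (F : Finset ι) (A : ι → Finset V)
    (L t : ℕ) (hA : ∀ i ∈ F, L ≤ (A i).card)
    (hlt : F.card * (Fintype.card V - L) ^ t < Fintype.card V ^ t) :
    ∃ f : Fin t → V, ∀ i ∈ F, ∃ j, f j ∈ A i := by
  by_contra! hcon
  have hcover : (Finset.univ : Finset (Fin t → V)) ⊆
      F.biUnion fun i => Fintype.piFinset fun _ => (A i)ᶜ := by
    intro f _
    obtain ⟨i, hi, h⟩ := hcon f
    simp only [Finset.mem_biUnion, Fintype.mem_piFinset, Finset.mem_compl]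
    exact ⟨i, hi, h⟩
  have h₁ := Finset.card_le_card hcover
  have h₂ : (F.biUnion fun i => Fintype.piFinset fun _ : Fin t => (A i)ᶜ).card ≤
      F.card * (Fintype.card V - L) ^ t := by
    refine Finset.card_biUnion_le_card_mul _ _ _ fun i hi => ?_
    rw [Fintype.card_piFinset]
    simp only [Finset.prod_const, Finset.card_univ, Fintype.card_fin, Finset.card_compl]
    exact Nat.pow_le_pow_left (Nat.sub_le_sub_left (hA i hi) _) _
  rw [Finset.card_univ, Fintype.card_fun, Fintype.card_fin] at h₁
  omega

/-- Every shortest walk with `L` edges has at least `L` distinct vertices, since the values of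
`G.hop u` on it are `0, …, L`; so a short tuple of vertices meets all of them. -/
theorem exists_hitting_between [Fintype V] [DecidableEq V] {G : WDigraph V} (hG : G.Nonneg)
    (L t : ℕ)
    (hlt : Fintype.card V ^ 2 * (Fintype.card V - L) ^ t < Fintype.card V ^ t) :
    ∃ f : Fin t → V, ∀ u v, G.dist u v ≠ ⊤ → G.hop u v = L → ∃ j, Between G u (f j) v := by
  classical
  have hcard : ∀ p ∈ Finset.univ.filter
      (fun p : V × V => G.dist p.1 p.2 ≠ ⊤ ∧ G.hop p.1 p.2 = L),
      L ≤ (Finset.univ.filter fun x => Between G p.1 x p.2).card := by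
    rintro ⟨u, v⟩ hp
    simp only [Finset.mem_filter, Finset.mem_univ, true_and] at hp
    have hsub : Finset.range L ⊆
        (Finset.univ.filter fun x => Between G u x v).image (G.hop u) := by
      intro i hi
      obtain ⟨x, hx, hxi⟩ := exists_between hG hp.1 (i := i)
        (by rw [hp.2]; exact (Finset.mem_range.1 hi).le)
      exact Finset.mem_image.2 ⟨x, by simpa using hx, hxi⟩
    have := (Finset.card_le_card hsub).trans Finset.card_image_le
    simpa using this
  obtain ⟨f, hf⟩ := exists_hitting _ _ L t hcard (by
    refine lt_of_le_of_lt (Nat.mul_le_mul_right _ ?_) hlt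
    refine (Finset.card_le_univ _).trans ?_
    rw [Fintype.card_prod, sq])
  refine ⟨f, fun u v hd hL => ?_⟩
  obtain ⟨j, hj⟩ := hf (u, v) (by simp [hd, hL])
  exact ⟨j, by simpa using hj⟩

section Hit

variable {G : WDigraph V} {L t : ℕ} {f : Fin t → V}

/-- The first `L` edges of a long shortest walk contain a sampled vertex. -/
theorem hit_first (hG : G.Nonneg)
    (hf : ∀ u v, G.dist u v ≠ ⊤ → G.hop u v = L → ∃ j, Between G u (f j) v)
    {u v : V} (h : G.dist u v ≠ ⊤) (hL : L ≤ G.hop u v) :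
    ∃ j, Between G u (f j) v ∧ G.hop u (f j) ≤ L := by
  obtain ⟨y, hy, hyL⟩ := exists_between hG h hL
  obtain ⟨j, hj⟩ := hf u y hy.ne_top_left hyL
  have := hj.hop_add
  exact ⟨j, (hy.trans_left hG hj).1, by omega⟩

/-- The last `L` edges of a long shortest walk contain a sampled vertex. -/
theorem hit_last (hG : G.Nonneg)
    (hf : ∀ u v, G.dist u v ≠ ⊤ → G.hop u v = L → ∃ j, Between G u (f j) v)
    {u v : V} (h : G.dist u v ≠ ⊤) (hL : L ≤ G.hop u v) :
    ∃ j, Between G u (f j) v ∧ G.hop (f j) v ≤ L := by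
  obtain ⟨y, hy, hyL⟩ := exists_between hG h (Nat.sub_le (G.hop u v) L)
  have h₁ := hy.hop_add
  obtain ⟨j, hj⟩ := hf y v hy.ne_top_right (by omega)
  have := hj.hop_add
  exact ⟨j, hy.trans_right hG hj, by omega⟩

/-! ### The graph on the sampled vertices -/

open Classical in
/-- The graph on the indices of the sampled vertices, with an edge wherever a shortest walk of `G`
has at most `L + 1` edges, weighted by the distance in `G` rescaled by `σ`. -/
noncomputable def sampleGraph (G : WDigraph V) (L : ℕ) {t : ℕ} (f : Fin t → V) (σ : ℝ) :
    WDigraph (Fin t) where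
  edges := Finset.univ.filter fun p =>
    G.dist (f p.1) (f p.2) ≠ ⊤ ∧ G.hop (f p.1) (f p.2) ≤ L + 1
  w := fun p => σ * (G.dist (f p.1) (f p.2)).toReal

theorem mem_sampleGraph_edges {σ : ℝ} {p : Fin t × Fin t} :
    p ∈ (sampleGraph G L f σ).edges ↔
      G.dist (f p.1) (f p.2) ≠ ⊤ ∧ G.hop (f p.1) (f p.2) ≤ L + 1 := by
  simp [sampleGraph]

theorem sampleGraph_nonneg {σ : ℝ} (hσ : 0 < σ) : (sampleGraph G L f σ).Nonneg :=
  fun _ => mul_nonneg hσ.le ENNReal.toReal_nonneg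

theorem sampleGraph_ofReal_w {σ : ℝ} (hσ : 0 < σ) {p : Fin t × Fin t}
    (hp : G.dist (f p.1) (f p.2) ≠ ⊤) :
    ENNReal.ofReal ((sampleGraph G L f σ).w p) =
      ENNReal.ofReal σ * G.dist (f p.1) (f p.2) := by
  simp only [sampleGraph]
  rw [ENNReal.ofReal_mul hσ.le, ENNReal.ofReal_toReal hp]

/-- Sampling preserves distances up to the scaling: a shortest walk of `G` between sampled
vertices is cut at sampled vertices at most `L + 1` edges apart. -/
theorem sampleGraph_dist (hG : G.Nonneg)
    (hf : ∀ u v, G.dist u v ≠ ⊤ → G.hop u v = L → ∃ j, Between G u (f j) v)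
    {σ : ℝ} (hσ : 0 < σ) (i j : Fin t) :
    (sampleGraph G L f σ).dist i j = ENNReal.ofReal σ * G.dist (f i) (f j) := by
  have hS := sampleGraph_nonneg (G := G) (L := L) (f := f) hσ
  apply le_antisymm
  · by_cases htop : G.dist (f i) (f j) = ⊤
    · rw [htop, ENNReal.mul_top (by simpa using hσ)]
      exact le_top
    induction hn : G.hop (f i) (f j) using Nat.strong_induction_on generalizing i with
    | _ n ih =>
      by_cases hle : n ≤ L + 1
      · have hmem : (i, j) ∈ (sampleGraph G L f σ).edges :=
          mem_sampleGraph_edges.2 ⟨htop, by simpa [hn] using hle⟩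
        exact (dist_le_of_mem_edges hmem).trans_eq (sampleGraph_ofReal_w hσ htop)
      · -- Skipping the first edge before hitting forces strict progress.
        obtain ⟨y, hy, hy1⟩ := exists_between hG htop (i := 1) (by omega)
        have hya := hy.hop_add
        obtain ⟨x, hx, hxL⟩ := hit_first hG hf hy.ne_top_right (by omega)
        have hb := hy.trans_right hG hx
        have hxa := hx.hop_add
        have hba := hb.hop_add
        have hmem : (i, x) ∈ (sampleGraph G L f σ).edges :=
          mem_sampleGraph_edges.2 ⟨hb.ne_top_left, by simp only; omega⟩
        have h₁ := (dist_le_of_mem_edges hmem).trans_eq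
          (sampleGraph_ofReal_w hσ hb.ne_top_left)
        have h₂ := ih (G.hop (f x) (f j)) (by omega) x hb.ne_top_right rfl
        refine (dist_triangle hS i x j).trans ((add_le_add h₁ h₂).trans_eq ?_)
        rw [← mul_add, hb.dist_add]
  · refine le_iInf₂ fun l hl => le_walkWeight hS
      (fun i j => ENNReal.ofReal σ * G.dist (f i) (f j)) (by simp) ?_ ?_ hl
    · intro x y z
      rw [← mul_add]
      gcongr
      exact dist_triangle hG _ _ _
    · intro e he
      exact (sampleGraph_ofReal_w hσ (mem_sampleGraph_edges.1 he).1).ge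

/-- A shortest walk of `G` with at most `β` edges survives in the augmented graph. -/
theorem hopDist_augment_le [DecidableEq V] (hG : G.Nonneg) (H : Finset (V × V)) {u v : V}
    (h : G.dist u v ≠ ⊤) {β : ℕ} (hβ : G.hop u v ≤ β) :
    (G.augment H).hopDist β u v ≤ G.dist u v := by
  obtain ⟨l, hl, hw, hlen⟩ := hop_spec hG h
  obtain ⟨h₁, h₂⟩ := augment_walk hG H hl
  exact (hopDist_le h₁ (by omega)).trans (h₂.trans_eq hw)

/-- Walks in the augmented sampled graph expand into walks in the augmented original graph: an
added edge is copied, and any other edge becomes a walk with at most `L + 1` edges. -/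
theorem expand_walk [DecidableEq V] (hG : G.Nonneg)
    (hf : ∀ u v, G.dist u v ≠ ⊤ → G.hop u v = L → ∃ j, Between G u (f j) v)
    {σ : ℝ} (hσ : 0 < σ) {H : Finset (Fin t × Fin t)}
    (hH : ∀ e ∈ H, (sampleGraph G L f σ).dist e.1 e.2 ≠ ⊤)
    {i j : Fin t} {l : List (Fin t × Fin t)}
    (hl : IsWalkFrom ((sampleGraph G L f σ).augment H) i j l) :
    ENNReal.ofReal σ *
        (G.augment (H.image (Prod.map f f))).hopDist (l.length * (L + 1)) (f i) (f j) ≤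
      walkWeight ((sampleGraph G L f σ).augment H) l := by
  have hS := sampleGraph_nonneg (G := G) (L := L) (f := f) hσ
  have hσ0 : ENNReal.ofReal σ ≠ 0 := by simpa using hσ
  set K := G.augment (H.image (Prod.map f f)) with hK
  have hKn : K.Nonneg := augment_nonneg hG _
  induction l generalizing i with
  | nil =>
    obtain rfl : i = j := hl
    have : K.hopDist 0 (f i) (f i) ≤ walkWeight K [] := hopDist_le (l := []) rfl le_rfl
    rw [walkWeight_nil] at this
    simp [nonpos_iff_eq_zero.1 this]
  | cons e l ih =>
    obtain ⟨he, rfl, hl'⟩ := hl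
    have key : ENNReal.ofReal σ * K.hopDist (L + 1) (f e.1) (f e.2) ≤
        ENNReal.ofReal (((sampleGraph G L f σ).augment H).w e) := by
      by_cases heH : e ∈ H
      · have hd := hH e heH
        have hw : ((sampleGraph G L f σ).augment H).w e =
            ((sampleGraph G L f σ).dist e.1 e.2).toReal := by simp [WDigraph.augment, heH]
        rw [hw, ENNReal.ofReal_toReal hd, sampleGraph_dist hG hf hσ]
        rw [sampleGraph_dist hG hf hσ] at hd
        have hd' : G.dist (f e.1) (f e.2) ≠ ⊤ := by
          intro h
          rw [h, ENNReal.mul_top hσ0] at hd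
          exact hd rfl
        gcongr
        have hmem : (f e.1, f e.2) ∈ H.image (Prod.map f f) :=
          Finset.mem_image.2 ⟨e, heH, rfl⟩
        have hwalk : IsWalkFrom K (f e.1) (f e.2) [(f e.1, f e.2)] :=
          ⟨by simp only [hK, WDigraph.augment, Finset.mem_union]; exact Or.inr hmem, rfl, rfl⟩
        refine (hopDist_le hwalk (by simp)).trans_eq ?_
        have hwK : K.w (f e.1, f e.2) = (G.dist (f e.1) (f e.2)).toReal := by
          simp only [hK, WDigraph.augment]
          rw [if_pos hmem]
        simp only [walkWeight, List.map_cons, List.map_nil, List.sum_cons, List.sum_nil, add_zero,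
          hwK]
        exact ENNReal.ofReal_toReal hd'
      · have hmem : e ∈ (sampleGraph G L f σ).edges := by
          simpa [WDigraph.augment, heH] using he
        have hw : ((sampleGraph G L f σ).augment H).w e = (sampleGraph G L f σ).w e := by
          simp [WDigraph.augment, heH]
        obtain ⟨hd, hh⟩ := mem_sampleGraph_edges.1 hmem
        rw [hw, sampleGraph_ofReal_w hσ hd]
        gcongr
        exact hopDist_augment_le hG _ hd hh
    rw [walkWeight_cons (augment_nonneg hS H)]
    refine le_trans ?_ (add_le_add key (ih hl'))
    rw [← mul_add, List.length_cons, Nat.succ_mul, add_comm (l.length * (L + 1))]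
    gcongr
    exact hopDist_triangle hKn _ _ _ _ _

/-- A hopset of the sampled graph is, through `f`, a hopset of the original graph. -/
theorem IsHopset.of_sampleGraph [DecidableEq V] (hG : G.Nonneg)
    (hf : ∀ u v, G.dist u v ≠ ⊤ → G.hop u v = L → ∃ j, Between G u (f j) v)
    {σ : ℝ} (hσ : 0 < σ) {H : Finset (Fin t × Fin t)} {B : ℕ} (hB : 1 ≤ B) {ε : ℝ} (hε : 0 ≤ ε)
    (hH : IsHopset (sampleGraph G L f σ) B ε H) :
    IsHopset G (2 * L + B * (L + 1)) ε (H.image (Prod.map f f)) := by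
  have hσ0 : ENNReal.ofReal σ ≠ 0 := by simpa using hσ
  have hfin : ∀ e ∈ H, (sampleGraph G L f σ).dist e.1 e.2 ≠ ⊤ := fun e he => hH.dist_ne_top hB he
  set K := G.augment (H.image (Prod.map f f)) with hK
  have hKn : K.Nonneg := augment_nonneg hG _
  have hone : (1 : ℝ≥0∞) ≤ ENNReal.ofReal (1 + ε) := by
    rw [ENNReal.one_le_ofReal]
    linarith
  have hsamp : ∀ i j, K.hopDist (B * (L + 1)) (f i) (f j) ≤
      ENNReal.ofReal (1 + ε) * G.dist (f i) (f j) := by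
    intro i j
    have h₁ : ENNReal.ofReal σ * K.hopDist (B * (L + 1)) (f i) (f j) ≤
        ((sampleGraph G L f σ).augment H).hopDist B i j := by
      refine le_iInf₂ fun l hl => le_trans ?_ (expand_walk hG hf hσ hfin hl.1)
      gcongr
      exact hopDist_anti (Nat.mul_le_mul_right _ hl.2)
    have h₂ := h₁.trans (hH i j).2
    rw [sampleGraph_dist hG hf hσ, mul_left_comm] at h₂
    exact (ENNReal.mul_le_mul_iff_right hσ0 ENNReal.ofReal_ne_top).1 h₂
  intro u v
  refine ⟨dist_le_hopDist_augment hG ?_ _ _ _, ?_⟩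
  · intro e he
    obtain ⟨p, hp, rfl⟩ := Finset.mem_image.1 he
    have := hfin p hp
    rw [sampleGraph_dist hG hf hσ] at this
    intro h
    simp only [Prod.map_fst, Prod.map_snd] at h
    rw [h, ENNReal.mul_top hσ0] at this
    exact this rfl
  by_cases htop : G.dist u v = ⊤
  · rw [htop, ENNReal.mul_top (by positivity)]
    exact le_top
  have hshort : ∀ x y, G.dist x y ≠ ⊤ → G.hop x y ≤ L →
      K.hopDist L x y ≤ ENNReal.ofReal (1 + ε) * G.dist x y := fun x y hd hh =>
    (hopDist_augment_le hG _ hd hh).trans (le_mul_of_one_le_left' hone)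
  by_cases h₁ : G.hop u v ≤ L
  · exact (hopDist_anti (by omega)).trans (hshort u v htop h₁)
  obtain ⟨i, hi, hiL⟩ := hit_first hG hf htop (by omega)
  have s₁ := hshort u (f i) hi.ne_top_left hiL
  have hsplit : 2 * L + B * (L + 1) = L + (B * (L + 1) + L) := by ring
  rw [hsplit, ← hi.dist_add, mul_add (ENNReal.ofReal _)]
  refine (hopDist_triangle hKn u (f i) v _ _).trans (add_le_add s₁ ?_)
  by_cases h₂ : G.hop (f i) v ≤ L
  · exact (hopDist_anti (by omega)).trans (hshort _ v hi.ne_top_right h₂)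
  obtain ⟨j, hj, hjL⟩ := hit_last hG hf hi.ne_top_right (by omega)
  rw [← hj.dist_add, mul_add (ENNReal.ofReal _)]
  exact (hopDist_triangle hKn (f i) (f j) v _ _).trans
    (add_le_add (hsamp i j) (hshort _ v hj.ne_top_right hjL))

end Hit

/-- Rescaling makes all weights of the sampled graph at most `1`; hence the degree of the
polynomial bound on the weights plays no role. -/
theorem exists_scale_polyBounded (G : WDigraph V) (L : ℕ) {t : ℕ} (f : Fin t → V) (q : ℕ) :
    ∃ σ : ℝ, 0 < σ ∧ (sampleGraph G L f σ).PolyBounded q := by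
  set T : ℝ := ∑ p : Fin t × Fin t, (G.dist (f p.1) (f p.2)).toReal with hT
  have hT0 : 0 ≤ T := Finset.sum_nonneg fun _ _ => ENNReal.toReal_nonneg
  refine ⟨(1 + T)⁻¹, by positivity, fun e _ => ?_⟩
  have hle : (G.dist (f e.1) (f e.2)).toReal ≤ T :=
    Finset.single_le_sum (f := fun p : Fin t × Fin t => (G.dist (f p.1) (f p.2)).toReal)
      (fun _ _ => ENNReal.toReal_nonneg) (Finset.mem_univ e)
  have ht : (1 : ℝ) ≤ (Fintype.card (Fin t) : ℝ) := by
    have : 0 < Fintype.card (Fin t) := Fintype.card_pos_iff.2 ⟨e.1⟩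
    exact_mod_cast this
  refine le_trans ?_ (one_le_pow₀ ht)
  simp only [sampleGraph]
  rw [inv_mul_le_iff₀ (by positivity)]
  linarith

/-! ### Choice of parameters -/

theorem hitting_numeric {n L t : ℕ} (hn : 2 ≤ n) (ht : 1 ≤ t)
    (h : 2 * n * Real.log n < L * t) : n ^ 2 * (n - L) ^ t < n ^ t := by
  rcases le_or_gt n L with hnL | hLn
  · rw [Nat.sub_eq_zero_of_le hnL, zero_pow (by omega), mul_zero]
    positivity
  have hn0 : (0 : ℝ) < n := by positivity
  have hcast : ((n - L : ℕ) : ℝ) = n * (1 - L / n) := by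
    rw [Nat.cast_sub hLn.le]
    field_simp
  have h0 : (0 : ℝ) ≤ 1 - L / n := by
    rw [sub_nonneg, div_le_one hn0]
    exact_mod_cast hLn.le
  have h1 : (1 - (L : ℝ) / n) ^ t ≤ Real.exp (-(L * t / n)) := by
    have := Real.add_one_le_exp (-((L : ℝ) / n))
    calc (1 - (L : ℝ) / n) ^ t ≤ Real.exp (-((L : ℝ) / n)) ^ t := by
          gcongr
          linarith
      _ = _ := by
          rw [← Real.exp_nat_mul]
          congr 1
          ring
  have h2 : (n : ℝ) ^ 2 = Real.exp (2 * Real.log n) := by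
    rw [mul_comm, Real.exp_mul, Real.exp_log hn0]
    norm_cast
  have h3 : (n : ℝ) ^ 2 * (1 - (L : ℝ) / n) ^ t < 1 := by
    calc (n : ℝ) ^ 2 * (1 - (L : ℝ) / n) ^ t
        ≤ Real.exp (2 * Real.log n) * Real.exp (-(L * t / n)) := by
          rw [h2]
          gcongr
      _ = Real.exp (2 * Real.log n - L * t / n) := by rw [← Real.exp_add, sub_eq_add_neg]
      _ < 1 := by
          rw [Real.exp_lt_one_iff, sub_neg, lt_div_iff₀ hn0]
          linarith
  have : ((n ^ 2 * (n - L) ^ t : ℕ) : ℝ) < ((n ^ t : ℕ) : ℝ) := by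
    push_cast
    rw [hcast, mul_pow]
    have hp : (0 : ℝ) < (n : ℝ) ^ t := by positivity
    nlinarith
  exact_mod_cast this

/-- Sampling `m` vertices turns an `m`-vertex hopset of hopbound `⌈m ^ b⌉` into an `n`-vertex
hopset of hopbound `18 β`, provided `n log n / m ^ (1 - b) ≤ β`. -/
theorem exists_hopset_of_sample {n m q : ℕ} {b ε β M : ℝ} (hb0 : 0 ≤ b) (hε : 0 ≤ ε)
    (hn : 2 ≤ n) (hm : 1 ≤ m) (hmn : m ≤ n) (hβ : (n : ℝ) ^ b < β)
    (hmβ : n * Real.log n / β ≤ (m : ℝ) ^ (1 - b))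
    (hyp : ∀ G : WDigraph (Fin m), G.Nonneg → G.PolyBounded q →
      ∃ H : Finset (Fin m × Fin m), IsHopset G ⌈(m : ℝ) ^ b⌉₊ ε H ∧ (H.card : ℝ) ≤ M)
    (G : WDigraph (Fin n)) (hG : G.Nonneg) :
    ∃ H : Finset (Fin n × Fin n), IsHopset G ⌈18 * β⌉₊ ε H ∧ (H.card : ℝ) ≤ M := by
  have hm0 : (0 : ℝ) < m := by exact_mod_cast hm
  have hn1 : (1 : ℝ) ≤ n := by exact_mod_cast (by omega : 1 ≤ n)
  have hlog : 0 < Real.log n := Real.log_pos (by exact_mod_cast hn)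
  have hβ0 : 0 < β := lt_of_le_of_lt (by positivity) hβ
  have hmb : (1 : ℝ) ≤ (m : ℝ) ^ b := Real.one_le_rpow (by exact_mod_cast hm) hb0
  have hmb' : (m : ℝ) ^ b ≤ β :=
    (Real.rpow_le_rpow hm0.le (by exact_mod_cast hmn) hb0).trans hβ.le
  set L : ℕ := ⌊2 * n * Real.log n / m⌋₊ + 1 with hL
  have hLlow : 2 * n * Real.log n / m < L := by
    rw [hL]
    push_cast
    exact Nat.lt_floor_add_one _
  have hLup : (L : ℝ) ≤ 2 * n * Real.log n / m + 1 := by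
    rw [hL]
    push_cast
    gcongr
    exact Nat.floor_le (by positivity)
  have hL1 : (1 : ℝ) ≤ L := by
    rw [hL]
    push_cast
    linarith [Nat.cast_nonneg (α := ℝ) ⌊2 * n * Real.log n / m⌋₊]
  have hnum := hitting_numeric hn hm (L := L) ((div_lt_iff₀ hm0).1 hLlow)
  obtain ⟨f, hf⟩ := exists_hitting_between hG L m (by simpa using hnum)
  obtain ⟨σ, hσ, hpoly⟩ := exists_scale_polyBounded G L f q
  obtain ⟨H, hH, hcard⟩ := hyp _ (sampleGraph_nonneg hσ) hpoly
  have hB : 1 ≤ ⌈(m : ℝ) ^ b⌉₊ := Nat.one_le_ceil_iff.2 (by linarith)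
  have hres := hH.of_sampleGraph hG hf hσ hB hε
  refine ⟨H.image (Prod.map f f), hres.mono hG ?_ ?_, ?_⟩
  · exact Nat.le_add_right_of_le (by omega)
  · have hprod : (m : ℝ) ^ b * (2 * n * Real.log n / m) ≤ 2 * β := by
      have e : (m : ℝ) ^ (1 - b) * (m : ℝ) ^ b = m := by
        rw [← Real.rpow_add hm0]
        simp
      rw [div_le_iff₀ hβ0] at hmβ
      rw [mul_div_assoc', div_le_iff₀ hm0]
      nlinarith [mul_le_mul_of_nonneg_left hmβ (by linarith : (0 : ℝ) ≤ 2 * (m : ℝ) ^ b)]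
    have hceil : (⌈(m : ℝ) ^ b⌉₊ : ℝ) ≤ 2 * (m : ℝ) ^ b :=
      (Nat.ceil_lt_add_one (by positivity)).le.trans (by linarith)
    have hreal : ((2 * L + ⌈(m : ℝ) ^ b⌉₊ * (L + 1) : ℕ) : ℝ) ≤ 18 * β := by
      push_cast
      calc (2 * L + ⌈(m : ℝ) ^ b⌉₊ * (L + 1) : ℝ)
          ≤ 2 * ((m : ℝ) ^ b * L) + 2 * (m : ℝ) ^ b * (L + L) := by
            gcongr
            nlinarith
        _ = 6 * ((m : ℝ) ^ b * L) := by ring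
        _ ≤ 6 * ((m : ℝ) ^ b * (2 * n * Real.log n / m + 1)) := by gcongr
        _ ≤ 18 * β := by linarith
    exact_mod_cast hreal.trans (Nat.le_ceil _)
  · exact le_trans (by exact_mod_cast Finset.card_image_le) hcard

end Hopsets

open Hopsets in
/-- From an algorithm producing `(⌈m^b⌉, ε)`-hopsets with
`≤ C·m^{2−ab}·(log m)^c` edges for every `m`-vertex directed weighted graph
(with polynomially bounded weights), one obtains, for every hopbound
`n^b < β ≤ n`, a `(⌈C''·β⌉, ε)`-hopset with `≤ C'·(n/β)^k·(log n)^{c'}` edges,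
where `k = (2 − ab)/(1 − b)`. -/
theorem stmt_2
    (a b : ℝ) (ha : 1 < a) (hb0 : 0 ≤ b) (hb1 : b < 1) (hba : b < 1 / (a - 1))
    (ε : ℝ) (hε : 0 ≤ ε) (q : ℕ)
    (k : ℝ) (hk : k = (2 - a * b) / (1 - b))
    (C c : ℝ) (hC : 1 ≤ C) (hc : 1 ≤ c)
    (hyp : ∀ m : ℕ, ∀ G : WDigraph (Fin m), G.Nonneg → G.PolyBounded q →
      ∃ H : Finset (Fin m × Fin m), IsHopset G ⌈(m : ℝ) ^ b⌉₊ ε H ∧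
        (H.card : ℝ) ≤ C * (m : ℝ) ^ (2 - a * b) * (Real.log m) ^ c) :
    ∃ C' c' C'' : ℝ, 1 ≤ C' ∧ 1 ≤ c' ∧ 1 ≤ C'' ∧
      ∀ n : ℕ, ∀ G : WDigraph (Fin n), G.Nonneg → G.PolyBounded q →
      ∀ β : ℝ, (n : ℝ) ^ b < β → β ≤ (n : ℝ) →
        ∃ H : Finset (Fin n × Fin n), IsHopset G ⌈C'' * β⌉₊ ε H ∧
          (H.card : ℝ) ≤ C' * ((n : ℝ) / β) ^ k * (Real.log n) ^ c' := by
  have hγ : 0 < 2 - a * b := by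
    have := (lt_div_iff₀ (by linarith : (0 : ℝ) < a - 1)).1 hba
    nlinarith
  have hb : 0 < 1 - b := by linarith
  have hk0 : 0 < k := hk ▸ div_pos hγ hb
  have hlog2 : 0 < Real.log 2 := Real.log_pos (by norm_num)
  have hlog2' : Real.log 2 ≤ 1 := by linarith [Real.log_two_lt_d9]
  refine ⟨C * 2 ^ (2 - a * b) * (Real.log 2)⁻¹ ^ k, k + c, 18, ?_, by linarith, by norm_num, ?_⟩
  · have h₁ : (1 : ℝ) ≤ 2 ^ (2 - a * b) := Real.one_le_rpow (by norm_num) hγ.le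
    have h₂ : (1 : ℝ) ≤ (Real.log 2)⁻¹ ^ k :=
      Real.one_le_rpow ((one_le_inv₀ hlog2).2 hlog2') hk0.le
    exact one_le_mul_of_one_le_of_one_le (one_le_mul_of_one_le_of_one_le hC h₁) h₂
  intro n G hG hq β hβ hβn
  have hn : 2 ≤ n := by
    by_contra! hlt
    interval_cases n
    · have : (0 : ℝ) ≤ ((0 : ℕ) : ℝ) ^ b := by positivity
      push_cast at *
      linarith
    · simp at hβ hβn
      linarith
  have hn1 : (1 : ℝ) < n := by exact_mod_cast hn
  have hnb : (1 : ℝ) ≤ (n : ℝ) ^ b := Real.one_le_rpow hn1.le hb0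
  have hβ0 : 0 < β := by linarith
  have hlogn : Real.log 2 ≤ Real.log n := Real.log_le_log (by norm_num) (by exact_mod_cast hn)
  have hlogn0 : 0 < Real.log n := by linarith
  -- The sample size solves `n log n / m ^ (1 - b) = β`; dividing by `log 2` makes it at least `1`.
  set ρ : ℝ := n / β * (Real.log n / Real.log 2) with hρ
  have hρ1 : 1 ≤ ρ := one_le_mul_of_one_le_of_one_le ((one_le_div hβ0).2 hβn)
    ((one_le_div hlog2).2 hlogn)
  set μ : ℝ := ρ ^ (1 - b)⁻¹ with hμ
  have hμ1 : 1 ≤ μ := Real.one_le_rpow hρ1 (by positivity)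
  have hμγ : μ ^ (2 - a * b) =
      ((n : ℝ) / β) ^ k * (Real.log n) ^ k * (Real.log 2)⁻¹ ^ k := by
    rw [hμ, ← Real.rpow_mul (by linarith), inv_mul_eq_div, ← hk, hρ, div_eq_mul_inv (Real.log n),
      Real.mul_rpow (by positivity) (by positivity), Real.mul_rpow (by positivity) (by positivity),
      mul_assoc]
  have hcard : ∀ m : ℕ, 1 ≤ m → m ≤ n → (m : ℝ) ≤ 2 * μ →
      C * (m : ℝ) ^ (2 - a * b) * (Real.log m) ^ c ≤
        C * 2 ^ (2 - a * b) * (Real.log 2)⁻¹ ^ k * ((n : ℝ) / β) ^ k * (Real.log n) ^ (k + c) := by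
    intro m hm hmn hmμ
    have hm1 : (1 : ℝ) ≤ m := by exact_mod_cast hm
    have h₁ : (m : ℝ) ^ (2 - a * b) ≤ 2 ^ (2 - a * b) * μ ^ (2 - a * b) := by
      rw [← Real.mul_rpow (by norm_num) (by linarith)]
      exact Real.rpow_le_rpow (by linarith) hmμ hγ.le
    have h₂ : (Real.log m) ^ c ≤ (Real.log n) ^ c :=
      Real.rpow_le_rpow (Real.log_nonneg hm1)
        (Real.log_le_log (by linarith) (by exact_mod_cast hmn)) (by linarith)
    calc C * (m : ℝ) ^ (2 - a * b) * (Real.log m) ^ c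
        ≤ C * (2 ^ (2 - a * b) * μ ^ (2 - a * b)) * (Real.log n) ^ c :=
          mul_le_mul (mul_le_mul_of_nonneg_left h₁ (by linarith)) h₂
            (Real.rpow_nonneg (Real.log_nonneg hm1) _) (by positivity)
      _ = _ := by
          rw [hμγ, Real.rpow_add hlogn0]
          ring
  rcases le_or_gt ⌈μ⌉₊ n with hle | hgt
  · have hm : 1 ≤ ⌈μ⌉₊ := Nat.one_le_ceil_iff.2 (by linarith)
    have hmβ : n * Real.log n / β ≤ (⌈μ⌉₊ : ℝ) ^ (1 - b) := by
      calc n * Real.log n / β = n / β * (Real.log n / 1) := by ring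
        _ ≤ ρ := by
          rw [hρ]
          gcongr
        _ = μ ^ (1 - b) := by
          rw [hμ, ← Real.rpow_mul (by linarith), inv_mul_cancel₀ hb.ne', Real.rpow_one]
        _ ≤ _ := Real.rpow_le_rpow (by linarith) (Nat.le_ceil _) hb.le
    obtain ⟨H, hH, hHc⟩ :=
      exists_hopset_of_sample hb0 hε hn hm hle hβ hmβ (hyp ⌈μ⌉₊) G hG
    refine ⟨H, hH, hHc.trans (hcard _ hm hle ?_)⟩
    linarith [Nat.ceil_lt_add_one (by linarith : 0 ≤ μ)]
  · -- The sample would exceed the whole vertex set, so `G` itself is small enough.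
    have hnμ : (n : ℝ) < μ := Nat.lt_ceil.1 hgt
    obtain ⟨H, hH, hHc⟩ := hyp n G hG hq
    refine ⟨H, hH.mono hG (Nat.one_le_ceil_iff.2 (by linarith)) ?_,
      hHc.trans (hcard n (by omega) le_rfl (by linarith))⟩
    exact Nat.ceil_le_ceil (by linarith)
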